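/- arXiv:0711.0071 — 10 statements merged into one kernel-verified Lean document; each statement's English description precedes it below -/
import Mathlib

section
/- Let μ• = (μ_w)_{w∈W} ∈ 𝒱, let w, w' ∈ W and i ∈ I. If w({1,…,i}) = w'({1,…,i}) (equivalently, the functionals w·Λ_i and w'·Λ_i coincide on ℝ^N), then (w·Λ_i)(μ_w) = (w'·Λ_i)(μ_{w'}). In other words, the number M_{w·Λ_i} := (w·Λ_i)(μ_w) depends only on the functional w·Λ_i and not on the chosen expression. -/
/-!
The functional `w·Λ_i` is a sum of coordinates over the set `w({1,…,i})`, so the hypothesis says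
that `w·Λ_i = w'·Λ_i` (`chamberWt_eq_sum_image`). Since `w·Λ_i` is nonnegative on the cone
spanned by the `w·h_j`, it is monotone for `≥_w` (`chamberWt_mono`). Evaluating the common
functional on `μ_{w'} ≥_w μ_w` and on `μ_w ≥_{w'} μ_{w'}` gives the two opposite inequalities.
-/

namespace MV

/-- The action of a permutation `w` on `ℝ^N`: `(w·x)_k = x_{w⁻¹(k)}`. -/
def act (ℓ : ℕ) (w : Equiv.Perm (Fin (ℓ+1))) (x : Fin (ℓ+1) → ℝ) : Fin (ℓ+1) → ℝ :=
  fun k => x (w⁻¹ k)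

/-- The subspace `V = {x ∈ ℝ^N : Σ x_k = 0}`. -/
def Vsub (ℓ : ℕ) : Set (Fin (ℓ+1) → ℝ) := {x | ∑ k, x k = 0}

/-- The simple coroot `h_i = e_i - e_{i+1}` (here `i : Fin ℓ` encodes the 1-based index `i+1`). -/
def coroot (ℓ : ℕ) (i : Fin ℓ) : Fin (ℓ+1) → ℝ :=
  fun k => (if (k : ℕ) = (i : ℕ) then 1 else 0) - (if (k : ℕ) = (i : ℕ) + 1 then 1 else 0)

/-- The cone `Σ_{j∈I} ℝ_{≥0} h_j`. -/
def corootCone (ℓ : ℕ) : Set (Fin (ℓ+1) → ℝ) :=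
  {x | ∃ c : Fin ℓ → ℝ, (∀ j, 0 ≤ c j) ∧ x = ∑ j, c j • coroot ℓ j}

/-- The partial order `h ≥_w h'`. -/
def geOrd (ℓ : ℕ) (w : Equiv.Perm (Fin (ℓ+1))) (h h' : Fin (ℓ+1) → ℝ) : Prop :=
  act ℓ w⁻¹ (h - h') ∈ corootCone ℓ

/-- The simple reflection `s_i`, the transposition of (1-based) `i` and `i+1`. -/
def simpleRefl (ℓ : ℕ) (i : Fin ℓ) : Equiv.Perm (Fin (ℓ+1)) :=
  Equiv.swap i.castSucc i.succ

/-- The longest element `w₀ : k ↦ N+1-k`. -/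
def w0 (ℓ : ℕ) : Equiv.Perm (Fin (ℓ+1)) := Fin.revPerm

/-- The chamber weight functional `w·Λ_i : x ↦ x_{w(1)} + ⋯ + x_{w(i)}`. -/
def chamberWt (ℓ : ℕ) (w : Equiv.Perm (Fin (ℓ+1))) (i : Fin ℓ) (x : Fin (ℓ+1) → ℝ) : ℝ :=
  ∑ k ∈ Finset.univ.filter (fun k : Fin (ℓ+1) => (k : ℕ) ≤ (i : ℕ)), x (w k)

/-- The set `𝒱` of GGMS data. -/
def calV (ℓ : ℕ) : Set (Equiv.Perm (Fin (ℓ+1)) → Fin (ℓ+1) → ℝ) :=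
  {μ | (∀ w, μ w ∈ Vsub ℓ) ∧ (∀ w w', geOrd ℓ w (μ w') (μ w)) ∧ μ (w0 ℓ) = 0}

/-- The Cartan matrix of type `A_ℓ`. -/
def cartan (ℓ : ℕ) (i j : Fin ℓ) : ℝ :=
  if i = j then 2 else if (i : ℕ) + 1 = (j : ℕ) ∨ (j : ℕ) + 1 = (i : ℕ) then -1 else 0

/-- The linear involution `J : (Jx)_k = -x_{N+1-k}`. -/
def Jmap (ℓ : ℕ) (x : Fin (ℓ+1) → ℝ) : Fin (ℓ+1) → ℝ := fun k => - x k.rev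

/-- Nat-indexed (0-based) simple coroot, used for the folded coroots. -/
def corootN (ℓ : ℕ) (j : ℕ) : Fin (ℓ+1) → ℝ :=
  fun k => (if (k : ℕ) = j then 1 else 0) - (if (k : ℕ) = j + 1 then 1 else 0)

/-- The folded simple coroot `h_j^ω` (here `j : Fin n` encodes the 1-based index `j+1`):
`h_j^ω = h_j + h_{ℓ+1-j}` for `1 ≤ j ≤ n-1`, `h_n^ω = h_n` if `ℓ = 2n-1`, and
`h_n^ω = 2(h_n + h_{n+1})` if `ℓ = 2n`. -/
def fcoroot (ℓ n : ℕ) (j : Fin n) : Fin (ℓ+1) → ℝ :=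
  if (j : ℕ) + 1 < n then corootN ℓ j + corootN ℓ (ℓ - 1 - j)
  else if ℓ = 2 * n - 1 then corootN ℓ j
  else (2 : ℝ) • (corootN ℓ j + corootN ℓ ((j : ℕ) + 1))

/-- The folded coroot cone `Σ_{j=1}^{n} ℝ_{≥0} h_j^ω`. -/
def fcone (ℓ n : ℕ) : Set (Fin (ℓ+1) → ℝ) :=
  {x | ∃ c : Fin n → ℝ, (∀ j, 0 ≤ c j) ∧ x = ∑ j, c j • fcoroot ℓ n j}


/-- The simple transposition `s_{a+1}` (0-based `a`) in the symmetric group of `{1,…,m+1}`. -/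
def swN (m a : ℕ) : Equiv.Perm (Fin (m+1)) :=
  if h : a + 1 ≤ m then Equiv.swap ⟨a, by omega⟩ ⟨a + 1, by omega⟩ else 1

end MV

open MV

/-- The fundamental weight takes the value `δ_{ij} ≥ 0` on `h_j`, so `w·Λ_i` is monotone
for `≥_w`. -/
lemma chamberWt_mono (ℓ : ℕ) (w : Equiv.Perm (Fin (ℓ+1))) (i : Fin ℓ)
    {x y : Fin (ℓ+1) → ℝ} (h : geOrd ℓ w x y) :
    chamberWt ℓ w i y ≤ chamberWt ℓ w i x := by
  obtain ⟨c, hc, hxy⟩ := h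
  have hpt : ∀ k, x (w k) - y (w k) = ∑ j, c j * coroot ℓ j k := fun k => by
    simpa [act, Finset.sum_apply] using congrFun hxy k
  rw [← sub_nonneg]
  unfold chamberWt
  rw [← Finset.sum_sub_distrib, Finset.sum_congr rfl fun k _ => hpt k, Finset.sum_comm]
  refine Finset.sum_nonneg fun j _ => ?_
  rw [← Finset.mul_sum]
  refine mul_nonneg (hc j) ?_
  have h1 : ∀ k : Fin (ℓ+1), coroot ℓ j k
      = (if k = j.castSucc then (1 : ℝ) else 0) - (if k = j.succ then 1 else 0) := fun k => by
    simp [coroot, Fin.ext_iff]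
  simp only [h1, Finset.sum_sub_distrib, Finset.sum_ite_eq', Finset.mem_filter,
    Finset.mem_univ, true_and, Fin.val_castSucc, Fin.val_succ]
  split_ifs <;> first | omega | norm_num

/-- The functional `w·Λ_i` is determined by the set `w({1,…,i})`. -/
lemma chamberWt_eq_sum_image (ℓ : ℕ) (w : Equiv.Perm (Fin (ℓ+1))) (i : Fin ℓ)
    (x : Fin (ℓ+1) → ℝ) :
    chamberWt ℓ w i x
      = ∑ k ∈ (Finset.univ.filter (fun k : Fin (ℓ+1) => (k : ℕ) ≤ (i : ℕ))).image ⇑w, x k :=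
  (Finset.sum_image fun _ _ _ _ h => w.injective h).symm

/-- the number `M_{w·Λ_i} = (w·Λ_i)(μ_w)` depends only on the chamber weight
`w·Λ_i`, i.e. only on the set `w({1,…,i})`. -/
theorem stmt1 (ℓ : ℕ) (hℓ : 3 ≤ ℓ)
    (μ : Equiv.Perm (Fin (ℓ+1)) → Fin (ℓ+1) → ℝ) (hμ : μ ∈ calV ℓ)
    (w w' : Equiv.Perm (Fin (ℓ+1))) (i : Fin ℓ)
    (hww' : (Finset.univ.filter (fun k : Fin (ℓ+1) => (k : ℕ) ≤ (i : ℕ))).image ⇑w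
          = (Finset.univ.filter (fun k : Fin (ℓ+1) => (k : ℕ) ≤ (i : ℕ))).image ⇑w') :
    chamberWt ℓ w i (μ w) = chamberWt ℓ w' i (μ w') := by
  have hfun : ∀ x, chamberWt ℓ w i x = chamberWt ℓ w' i x := fun x => by
    rw [chamberWt_eq_sum_image, chamberWt_eq_sum_image, hww']
  apply le_antisymm
  · rw [← hfun]
    exact chamberWt_mono ℓ w i (hμ.2.1 w w')
  · rw [hfun]
    exact chamberWt_mono ℓ w' i (hμ.2.1 w' w)
end

section
/- (Length formula.) Let μ• = (μ_w)_{w∈W} ∈ 𝒱, w ∈ W, i ∈ I. Then μ_{w s_i} − μ_w = L · (w·h_i), where L = −M_{w·Λ_i} − M_{w s_i·Λ_i} − Σ_{j∈I, j≠i} a_{ji} M_{w·Λ_j}; moreover L ≥ 0. -/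
open MV

namespace MV

lemma coroot_apply (ℓ : ℕ) (i : Fin ℓ) (k : Fin (ℓ+1)) :
    coroot ℓ i k = (if k = i.castSucc then 1 else 0) - (if k = i.succ then 1 else 0) := by
  simp [coroot, Fin.ext_iff]

lemma chamberWt_add (ℓ : ℕ) (w : Equiv.Perm (Fin (ℓ+1))) (i : Fin ℓ) (x y : Fin (ℓ+1) → ℝ) :
    chamberWt ℓ w i (x + y) = chamberWt ℓ w i x + chamberWt ℓ w i y := by
  simp [chamberWt, Finset.sum_add_distrib]

lemma chamberWt_smul (ℓ : ℕ) (w : Equiv.Perm (Fin (ℓ+1))) (i : Fin ℓ) (c : ℝ)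
    (x : Fin (ℓ+1) → ℝ) :
    chamberWt ℓ w i (c • x) = c * chamberWt ℓ w i x := by
  simp [chamberWt, Finset.mul_sum]

/-- The fundamental weights are dual to the simple coroots. -/
lemma chamberWt_one_coroot (ℓ : ℕ) (i j : Fin ℓ) :
    chamberWt ℓ 1 i (coroot ℓ j) = if i = j then 1 else 0 := by
  simp only [chamberWt, coroot_apply, Equiv.Perm.one_apply, Finset.sum_sub_distrib,
    Finset.sum_ite_eq', Finset.mem_filter, Finset.mem_univ, true_and, Fin.val_castSucc,
    Fin.val_succ]
  simp only [Fin.ext_iff]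
  split_ifs <;> first | omega | norm_num

lemma chamberWt_one_sum (ℓ : ℕ) (i : Fin ℓ) (c : Fin ℓ → ℝ) :
    chamberWt ℓ 1 i (∑ j, c j • coroot ℓ j) = c i := by
  have h : chamberWt ℓ 1 i (∑ j, c j • coroot ℓ j)
      = ∑ j, c j * chamberWt ℓ 1 i (coroot ℓ j) := by
    simp only [chamberWt, Finset.sum_apply, Pi.smul_apply, smul_eq_mul, Finset.mul_sum]
    exact Finset.sum_comm
  simp [h, chamberWt_one_coroot]

/-- The simple reflection subtracts `α_i(x)` times the coroot `h_i`. -/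
lemma swap_eq_sub_coroot (ℓ : ℕ) (i : Fin ℓ) (x : Fin (ℓ+1) → ℝ) :
    x ∘ simpleRefl ℓ i = x + (-(x i.castSucc - x i.succ)) • coroot ℓ i := by
  have hne : i.castSucc ≠ i.succ := (Fin.castSucc_lt_succ).ne
  funext k
  simp only [Function.comp, simpleRefl, Equiv.swap_apply_def, Pi.add_apply, Pi.smul_apply,
    coroot_apply, smul_eq_mul]
  split_ifs with h1 h2 h2
  · exact absurd (h1.symm.trans h2) hne
  · subst h1; ring
  · subst h2; ring
  · ring

/-- Vectors of `V` expand in the coroots with coefficients given by the fundamental weights. -/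
lemma eq_sum_coroot (ℓ : ℕ) (x : Fin (ℓ+1) → ℝ) (hx : ∑ k, x k = 0) :
    x = ∑ j, chamberWt ℓ 1 j x • coroot ℓ j := by
  set Q : ℕ → ℝ := fun n => ∑ k ∈ Finset.univ.filter (fun k : Fin (ℓ+1) => (k : ℕ) < n), x k
    with hQ
  have hQ0 : Q 0 = 0 := by simp [hQ]
  have hQl : Q (ℓ+1) = 0 := by
    rw [← hx, hQ]
    simp only
    rw [Finset.filter_true_of_mem (fun k _ => k.isLt)]
  have hP : ∀ j : Fin ℓ, chamberWt ℓ 1 j x = Q (j+1) := by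
    intro j; simp [chamberWt, hQ]
  have hstep : ∀ k : Fin (ℓ+1), Q (k+1) = Q k + x k := by
    intro k
    have : Finset.univ.filter (fun m : Fin (ℓ+1) => (m : ℕ) < k + 1)
        = insert k (Finset.univ.filter (fun m : Fin (ℓ+1) => (m : ℕ) < k)) := by
      ext m; simp [Fin.ext_iff]; omega
    simp only [hQ]
    rw [this, Finset.sum_insert (by simp)]
    ring
  funext k
  have h1 : ∑ j : Fin ℓ, Q (j+1) * (if k = j.castSucc then 1 else 0) = Q (k+1) := by
    have := Fin.sum_univ_castSucc (fun m : Fin (ℓ+1) => Q (m+1) * (if k = m then 1 else 0))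
    simp only [Fin.val_castSucc, Fin.val_last, hQl, zero_mul, add_zero] at this
    rw [← this]; simp
  have h2 : ∑ j : Fin ℓ, Q (j+1) * (if k = j.succ then 1 else 0) = Q k := by
    have := Fin.sum_univ_succ (fun m : Fin (ℓ+1) => Q m * (if k = m then 1 else 0))
    simp only [Fin.val_succ, Fin.val_zero, hQ0, zero_mul, zero_add] at this
    rw [← this]; simp
  simp only [Finset.sum_apply, Pi.smul_apply, smul_eq_mul, coroot_apply, mul_sub,
    Finset.sum_sub_distrib, hP, h1, h2, hstep]
  ring

lemma coroot_sub (ℓ : ℕ) (i j : Fin ℓ) :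
    coroot ℓ j i.castSucc - coroot ℓ j i.succ = cartan ℓ j i := by
  simp only [coroot, cartan, Fin.val_castSucc, Fin.val_succ, Fin.ext_iff]
  split_ifs <;> first | omega | norm_num

/-- On `V`, the simple root `α_i` equals `Σ_j a_{ji} Λ_j`. -/
lemma root_eq_sum_cartan (ℓ : ℕ) (i : Fin ℓ) (x : Fin (ℓ+1) → ℝ) (hx : ∑ k, x k = 0) :
    x i.castSucc - x i.succ = ∑ j, cartan ℓ j i * chamberWt ℓ 1 j x := by
  conv_lhs => rw [eq_sum_coroot ℓ x hx]
  simp only [Finset.sum_apply, Pi.smul_apply, smul_eq_mul, ← Finset.sum_sub_distrib, ← mul_sub,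
    coroot_sub]
  exact Finset.sum_congr rfl fun j _ => mul_comm _ _

end MV

/-- length formula: `μ_{w s_i} - μ_w = L · (w·h_i)` with
`L = -M_{w·Λ_i} - M_{w s_i·Λ_i} - Σ_{j≠i} a_{ji} M_{w·Λ_j}`, and `L ≥ 0`. -/
theorem stmt3 (ℓ : ℕ) (hℓ : 3 ≤ ℓ)
    (μ : Equiv.Perm (Fin (ℓ+1)) → Fin (ℓ+1) → ℝ) (hμ : μ ∈ calV ℓ)
    (w : Equiv.Perm (Fin (ℓ+1))) (i : Fin ℓ) :
    ∃ L : ℝ,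
      L = -(chamberWt ℓ w i (μ w))
          - chamberWt ℓ (w * simpleRefl ℓ i) i (μ (w * simpleRefl ℓ i))
          - ∑ j ∈ Finset.univ.erase i, cartan ℓ j i * chamberWt ℓ w j (μ w)
      ∧ μ (w * simpleRefl ℓ i) - μ w = L • act ℓ w (coroot ℓ i)
      ∧ 0 ≤ L := by
  obtain ⟨hV, hord, -⟩ := hμ
  set s := simpleRefl ℓ i with hs
  set u : Fin (ℓ+1) → ℝ := μ w ∘ w with hu
  set v : Fin (ℓ+1) → ℝ := μ (w * s) ∘ w with hv
  obtain ⟨c, hc, hce⟩ := hord w (w * s)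
  obtain ⟨c', hc', hce'⟩ := hord (w * s) w
  have e1 : v - u = ∑ j, c j • coroot ℓ j := by
    rw [← hce]; funext k; simp [hu, hv, act]
  have e2 : (u - v) ∘ s = ∑ j, c' j • coroot ℓ j := by
    rw [← hce']; funext k; simp only [hu, hv, act, inv_inv]; rfl
  -- For `j ≠ i` the weight `Λ_j` is `s_i`-invariant, so it takes opposite values on the two vectors.
  have hzero : ∀ j, j ≠ i → c j = 0 := by
    intro j hj
    have a1 := chamberWt_one_sum ℓ j c
    have a2 := chamberWt_one_sum ℓ j c'
    rw [← e1] at a1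
    rw [← e2, hs, swap_eq_sub_coroot, chamberWt_add, chamberWt_smul, chamberWt_one_coroot,
      if_neg hj, mul_zero, add_zero, show u - v = (-1 : ℝ) • (v - u) by simp,
      chamberWt_smul, a1] at a2
    linarith [hc j, hc' j]
  have hvu : v = u + c i • coroot ℓ i := by
    rw [Finset.sum_eq_single i (fun j _ hj => by rw [hzero j hj, zero_smul]) (by simp)] at e1
    rw [← e1]; abel
  have husum : ∑ k, u k = 0 := (Equiv.sum_comp w (μ w)).trans (hV w)
  refine ⟨c i, ?_, ?_, hc i⟩
  · have hM : chamberWt ℓ (w * s) i (μ (w * s)) = chamberWt ℓ 1 i (v ∘ s) := rfl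
    have hM' : ∀ j, chamberWt ℓ w j (μ w) = chamberWt ℓ 1 j u := fun j => rfl
    have hroot := root_eq_sum_cartan ℓ i u husum
    rw [← Finset.add_sum_erase _ _ (Finset.mem_univ i)] at hroot
    have hii : cartan ℓ i i = 2 := by simp [cartan]
    have hα := coroot_sub ℓ i i
    rw [hii] at hroot hα
    rw [hM, hs, swap_eq_sub_coroot, chamberWt_add, chamberWt_smul, chamberWt_one_coroot,
      if_pos rfl, hvu, chamberWt_add, chamberWt_smul, chamberWt_one_coroot, if_pos rfl]
    simp only [hM', Pi.add_apply, Pi.smul_apply, smul_eq_mul]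
    linear_combination (-1 : ℝ) * hroot - c i * hα
  · funext k
    have := congrFun hvu (w⁻¹ k)
    have hk : w (w⁻¹ k) = k := by simp
    simp only [hu, hv, Function.comp, Pi.add_apply, Pi.smul_apply, hk] at this
    simp only [Pi.sub_apply, Pi.smul_apply, act, this]
    ring
end

section
/- (Edge inequality.) Let μ : W → V be any collection, and let w ∈ W, i ∈ I, L ∈ ℝ be such that μ_{w s_i} − μ_w = L · (w·h_i). Then μ_{w s_i} ≥_w μ_w if and only if (w s_i·Λ_i)(μ_{w s_i}) + (w·Λ_i)(μ_w) + Σ_{j∈I, j≠i} a_{ji} (w·Λ_j)(μ_w) ≤ 0. -/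
open MV

/-- The prefix sum `y_1 + ⋯ + y_n`, with a natural-number bound so that the boundary values
`n = 0` and `n = ℓ + 1`, which are not fundamental weights, are covered. -/
def prefixSum (ℓ : ℕ) (y : Fin (ℓ+1) → ℝ) (n : ℕ) : ℝ :=
  ∑ k ∈ Finset.univ.filter (fun k : Fin (ℓ+1) => (k : ℕ) < n), y k

lemma chamberWt_eq_prefixSum (ℓ : ℕ) (w : Equiv.Perm (Fin (ℓ+1))) (i : Fin ℓ)
    (x : Fin (ℓ+1) → ℝ) :
    chamberWt ℓ w i x = prefixSum ℓ (fun k => x (w k)) (i + 1) := by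
  simp only [chamberWt, prefixSum, Nat.lt_succ_iff]

lemma prefixSum_zero (ℓ : ℕ) (y : Fin (ℓ+1) → ℝ) : prefixSum ℓ y 0 = 0 := by
  simp [prefixSum]

lemma prefixSum_top (ℓ : ℕ) (y : Fin (ℓ+1) → ℝ) : prefixSum ℓ y (ℓ + 1) = ∑ k, y k := by
  rw [prefixSum, Finset.filter_true_of_mem fun k _ => k.isLt]

lemma prefixSum_succ (ℓ : ℕ) (y : Fin (ℓ+1) → ℝ) (k : Fin (ℓ+1)) :
    prefixSum ℓ y (k + 1) = prefixSum ℓ y k + y k := by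
  have h : Finset.univ.filter (fun m : Fin (ℓ+1) => (m : ℕ) < k + 1)
      = insert k (Finset.univ.filter (fun m : Fin (ℓ+1) => (m : ℕ) < k)) := by
    ext m
    simp only [Finset.mem_filter, Finset.mem_univ, true_and, Finset.mem_insert, Fin.ext_iff]
    omega
  rw [prefixSum, h, Finset.sum_insert (by simp), prefixSum, add_comm]

/-- Pairing with the Cartan matrix is a discrete second difference; the vanishing boundary values
make the formula valid at the two ends of the diagram as well. -/
lemma sum_cartan (ℓ : ℕ) (i : Fin ℓ) (f : ℕ → ℝ) (h0 : f 0 = 0) (h1 : f (ℓ + 1) = 0) :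
    ∑ j, cartan ℓ j i * f (j + 1) = 2 * f (i + 1) - f i - f (i + 2) := by
  have hc : ∀ j : Fin ℓ, cartan ℓ j i * f (j + 1)
      = (if (j : ℕ) = i then 2 * f (i + 1) else 0) - (if (j : ℕ) + 1 = i then f i else 0)
        - (if (j : ℕ) = i + 1 then f (i + 2) else 0) := by
    intro j
    unfold cartan
    simp only [Fin.ext_iff]
    split_ifs <;> grind
  have e0 : ∑ j ∈ Finset.range ℓ, (if j + 1 = (i : ℕ) then f i else 0) = f i := by
    rcases Nat.eq_zero_or_pos (i : ℕ) with h | h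
    · simp [h, h0]
    · rw [Finset.sum_eq_single ((i : ℕ) - 1)]
      · rw [if_pos (by omega)]
      · intro b _ hb
        rw [if_neg (by omega)]
      · intro hb
        exact absurd (Finset.mem_range.2 (by omega)) hb
  have e2 : ∑ j ∈ Finset.range ℓ, (if j = (i : ℕ) + 1 then f (i + 2) else 0) = f (i + 2) := by
    rw [Finset.sum_ite_eq']
    split_ifs with h
    · rfl
    · have : (i : ℕ) + 2 = ℓ + 1 := by
        have := i.isLt
        simp only [Finset.mem_range] at h
        omega
      rw [this, h1]
  have e1 : ∑ j ∈ Finset.range ℓ, (if j = (i : ℕ) then 2 * f (i + 1) else 0) = 2 * f (i + 1) := by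
    rw [Finset.sum_ite_eq', if_pos (Finset.mem_range.2 i.isLt)]
  rw [Finset.sum_congr rfl (fun j _ => hc j), Finset.sum_sub_distrib, Finset.sum_sub_distrib,
    Fin.sum_univ_eq_sum_range (fun j => if j = (i : ℕ) then 2 * f (i + 1) else 0),
    Fin.sum_univ_eq_sum_range (fun j => if j + 1 = (i : ℕ) then f i else 0),
    Fin.sum_univ_eq_sum_range (fun j => if j = (i : ℕ) + 1 then f (i + 2) else 0), e0, e1, e2]

/-- The fundamental weights are dual to the simple coroots. -/
lemma prefixSum_coroot (ℓ : ℕ) (i j : Fin ℓ) :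
    prefixSum ℓ (coroot ℓ j) (i + 1) = if j = i then 1 else 0 := by
  have h1 : ∀ k : Fin (ℓ+1), ((k : ℕ) = j) ↔ k = j.castSucc := fun k => by simp [Fin.ext_iff]
  have h2 : ∀ k : Fin (ℓ+1), ((k : ℕ) = j + 1) ↔ k = j.succ := fun k => by simp [Fin.ext_iff]
  simp only [prefixSum, coroot, h1, h2, Finset.sum_sub_distrib, Finset.sum_ite_eq',
    Finset.mem_filter, Finset.mem_univ, true_and]
  simp only [Fin.val_castSucc, Fin.val_succ, Fin.ext_iff]
  split_ifs <;> first | omega | norm_num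

lemma smul_coroot_mem_corootCone (ℓ : ℕ) (i : Fin ℓ) (L : ℝ) :
    L • coroot ℓ i ∈ corootCone ℓ ↔ 0 ≤ L := by
  constructor
  · rintro ⟨c, hc, h⟩
    -- Evaluating the fundamental weight `Λ_i` on both sides identifies `L` with `c i`.
    have h' := congrArg (fun x => prefixSum ℓ x (i + 1)) h
    have hr : prefixSum ℓ (∑ j, c j • coroot ℓ j) (i + 1)
        = ∑ j, c j * prefixSum ℓ (coroot ℓ j) (i + 1) := by
      simp only [prefixSum, Finset.sum_apply, Pi.smul_apply, smul_eq_mul, Finset.mul_sum]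
      exact Finset.sum_comm
    have hl : prefixSum ℓ (L • coroot ℓ i) (i + 1) = L * prefixSum ℓ (coroot ℓ i) (i + 1) := by
      simp only [prefixSum, Pi.smul_apply, smul_eq_mul, Finset.mul_sum]
    simp only [hr, hl, prefixSum_coroot] at h'
    simp at h'
    exact h' ▸ hc i
  · intro hL
    refine ⟨fun j => if j = i then L else 0, fun j => ?_, ?_⟩
    · dsimp only
      split_ifs <;> simp [hL]
    · simp [ite_smul]

/-- Only the last term of the prefix sum of length `i` is moved by `s_i`. -/
lemma prefixSum_simpleRefl (ℓ : ℕ) (i : Fin ℓ) (y : Fin (ℓ+1) → ℝ) :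
    prefixSum ℓ (fun k => y (simpleRefl ℓ i k)) (i + 1) = prefixSum ℓ y i + y i.succ := by
  have h := prefixSum_succ ℓ (fun k => y (simpleRefl ℓ i k)) i.castSucc
  simp only [Fin.val_castSucc] at h
  rw [h]
  congr 1
  · refine Finset.sum_congr rfl fun k hk => ?_
    have hk' : (k : ℕ) < i := by simpa using hk
    dsimp only
    rw [simpleRefl, Equiv.swap_apply_of_ne_of_ne] <;>
      · simp only [ne_eq, Fin.ext_iff, Fin.val_castSucc, Fin.val_succ]
        omega
  · simp [simpleRefl]

/-- edge inequality: if `μ_{w s_i} - μ_w = L · (w·h_i)`, then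
`μ_{w s_i} ≥_w μ_w` iff
`M_{w s_i·Λ_i} + M_{w·Λ_i} + Σ_{j≠i} a_{ji} M_{w·Λ_j} ≤ 0`. -/
theorem stmt4 (ℓ : ℕ) (hℓ : 3 ≤ ℓ)
    (μ : Equiv.Perm (Fin (ℓ+1)) → Fin (ℓ+1) → ℝ) (hV : ∀ w, μ w ∈ Vsub ℓ)
    (w : Equiv.Perm (Fin (ℓ+1))) (i : Fin ℓ) (L : ℝ)
    (hL : μ (w * simpleRefl ℓ i) - μ w = L • act ℓ w (coroot ℓ i)) :
    geOrd ℓ w (μ (w * simpleRefl ℓ i)) (μ w)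
    ↔ chamberWt ℓ (w * simpleRefl ℓ i) i (μ (w * simpleRefl ℓ i))
        + chamberWt ℓ w i (μ w)
        + ∑ j ∈ Finset.univ.erase i, cartan ℓ j i * chamberWt ℓ w j (μ w) ≤ 0 := by
  have hact : act ℓ w⁻¹ (L • act ℓ w (coroot ℓ i)) = L • coroot ℓ i := by
    ext k
    simp [act]
  rw [geOrd, hL, hact, smul_coroot_mem_corootCone]
  generalize μ (w * simpleRefl ℓ i) = x at hL ⊢
  set y : Fin (ℓ+1) → ℝ := fun k => μ w (w k) with hy
  have hy0 : ∑ k, y k = 0 := (Equiv.sum_comp w (μ w)).trans (hV w)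
  have hx : x (w i.succ) = y i.succ - L := by
    have h := congrFun hL (w i.succ)
    simp [act, coroot] at h
    simp only [hy]
    linarith
  have hpre : prefixSum ℓ (fun k => x (w k)) i = prefixSum ℓ y i := by
    refine Finset.sum_congr rfl fun k hk => ?_
    have hk' : (k : ℕ) < i := by simpa using hk
    have h := congrFun hL (w k)
    have hc : coroot ℓ i k = 0 := by
      rw [coroot, if_neg (by omega), if_neg (by omega), sub_zero]
    simp [act, hc] at h
    simp only [hy]
    linarith
  have hs := prefixSum_simpleRefl ℓ i (fun k => x (w k))
  have hcar := sum_cartan ℓ i (prefixSum ℓ y) (prefixSum_zero ℓ y)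
    ((prefixSum_top ℓ y).trans hy0)
  rw [← Finset.add_sum_erase _ _ (Finset.mem_univ i)] at hcar
  have hii : cartan ℓ i i = 2 := by simp [cartan]
  have h1 := prefixSum_succ ℓ y i.castSucc
  have h2 := prefixSum_succ ℓ y i.succ
  simp only [Fin.val_castSucc, Fin.val_succ] at h1 h2
  have h3 : prefixSum ℓ y (i + 2) = prefixSum ℓ y (i + 1) + y i.succ := h2
  simp only [chamberWt_eq_prefixSum, Equiv.Perm.mul_apply]
  rw [hs, hpre, hx, ← hy]
  rw [hii] at hcar
  -- The left-hand side of the inequality is exactly `-L`.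
  constructor <;> intro h <;> linarith
end

section
/- For μ• ∈ 𝒱, the pseudo-Weyl polytope P(μ•) := {h ∈ V : h ≥_w μ_w for all w ∈ W} coincides with P(M•) := {h ∈ V : (w·Λ_i)(h) ≥ M_{w·Λ_i} for all w ∈ W and i ∈ I}, where M_{w·Λ_i} = (w·Λ_i)(μ_w). -/
namespace MV

/-- The sum of the coordinates of index at most `n`; for `n = i < ℓ` it is the fundamental weight
`Λ_{i+1}`, and for `n ≥ ℓ` it is the sum of all coordinates. -/
def prefixSum (ℓ n : ℕ) (x : Fin (ℓ+1) → ℝ) : ℝ :=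
  ∑ k ∈ Finset.univ.filter (fun k : Fin (ℓ+1) => (k : ℕ) ≤ n), x k

lemma prefixSum_coroot (ℓ n : ℕ) (j : Fin ℓ) :
    prefixSum ℓ n (coroot ℓ j) = if n = (j : ℕ) then 1 else 0 := by
  have h : coroot ℓ j = fun k =>
      (if k = j.castSucc then (1 : ℝ) else 0) - (if k = j.succ then 1 else 0) := by
    funext k
    simp [coroot, Fin.ext_iff]
  rw [prefixSum, h, Finset.sum_sub_distrib, Finset.sum_ite_eq', Finset.sum_ite_eq']
  simp only [Finset.mem_filter, Finset.mem_univ, true_and, Fin.val_castSucc, Fin.val_succ]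
  grind

lemma prefixSum_combination (ℓ n : ℕ) (c : Fin ℓ → ℝ) :
    prefixSum ℓ n (∑ j, c j • coroot ℓ j) = ∑ j : Fin ℓ, if n = (j : ℕ) then c j else 0 := by
  have h : prefixSum ℓ n (∑ j, c j • coroot ℓ j) = ∑ j, c j * prefixSum ℓ n (coroot ℓ j) := by
    simp only [prefixSum, Finset.sum_apply, Pi.smul_apply, smul_eq_mul, Finset.mul_sum]
    exact Finset.sum_comm
  simp [h, prefixSum_coroot]

lemma prefixSum_of_le {ℓ n : ℕ} (hn : ℓ ≤ n) (x : Fin (ℓ+1) → ℝ) :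
    prefixSum ℓ n x = ∑ k, x k := by
  rw [prefixSum, Finset.filter_true_of_mem]
  intro k _
  omega

lemma prefixSum_succ (ℓ n : ℕ) (hn : n + 1 < ℓ + 1) (x : Fin (ℓ+1) → ℝ) :
    prefixSum ℓ (n + 1) x = x ⟨n + 1, hn⟩ + prefixSum ℓ n x := by
  have h : Finset.univ.filter (fun k : Fin (ℓ+1) => (k : ℕ) ≤ n + 1)
      = insert ⟨n + 1, hn⟩ (Finset.univ.filter (fun k : Fin (ℓ+1) => (k : ℕ) ≤ n)) := by
    ext k
    simp only [Finset.mem_filter, Finset.mem_univ, true_and, Finset.mem_insert, Fin.ext_iff]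
    omega
  rw [prefixSum, h, Finset.sum_insert (by simp), prefixSum]

lemma prefixSum_zero (ℓ : ℕ) (x : Fin (ℓ+1) → ℝ) : prefixSum ℓ 0 x = x 0 := by
  have h : Finset.univ.filter (fun k : Fin (ℓ+1) => (k : ℕ) ≤ 0) = {0} := by
    ext k
    simp only [Finset.mem_filter, Finset.mem_univ, true_and, Finset.mem_singleton, Fin.ext_iff,
      Fin.val_zero]
    omega
  rw [prefixSum, h, Finset.sum_singleton]

/-- Successive differences of the prefix sums recover the coordinates. -/
lemma eq_of_prefixSum_eq {ℓ : ℕ} {x y : Fin (ℓ+1) → ℝ}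
    (h : ∀ n, prefixSum ℓ n x = prefixSum ℓ n y) : x = y := by
  funext ⟨k, hk⟩
  cases k with
  | zero => simpa [prefixSum_zero] using h 0
  | succ n =>
    have h1 := h (n + 1)
    rw [prefixSum_succ ℓ n hk, prefixSum_succ ℓ n hk, h n] at h1
    exact add_right_cancel h1

lemma mem_corootCone_iff {ℓ : ℕ} {x : Fin (ℓ+1) → ℝ} (hx : x ∈ Vsub ℓ) :
    x ∈ corootCone ℓ ↔ ∀ i : Fin ℓ, 0 ≤ prefixSum ℓ i x := by
  constructor
  · rintro ⟨c, hc, rfl⟩ i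
    rw [prefixSum_combination]
    exact Finset.sum_nonneg fun j _ => by split_ifs <;> simp [hc]
  · intro h
    refine ⟨fun j => prefixSum ℓ j x, h, eq_of_prefixSum_eq fun n => ?_⟩
    rw [prefixSum_combination]
    by_cases hn : n < ℓ
    · rw [Finset.sum_eq_single ⟨n, hn⟩] <;> simp +contextual [Fin.ext_iff, eq_comm]
    -- From index `ℓ` on, the prefix sum is the total sum, which vanishes on `V`.
    · rw [prefixSum_of_le (not_lt.mp hn), Finset.sum_eq_zero fun j _ => if_neg (by omega)]
      exact hx

/-- On `V`, the order `≥_w` is detected by the chamber weights `w·Λ_i`. -/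
lemma geOrd_iff {ℓ : ℕ} (w : Equiv.Perm (Fin (ℓ+1))) {h m : Fin (ℓ+1) → ℝ}
    (hh : h ∈ Vsub ℓ) (hm : m ∈ Vsub ℓ) :
    geOrd ℓ w h m ↔ ∀ i, chamberWt ℓ w i m ≤ chamberWt ℓ w i h := by
  have hV : act ℓ w⁻¹ (h - m) ∈ Vsub ℓ := by
    simp only [Vsub, Set.mem_ofPred_eq] at hh hm
    simp only [Vsub, Set.mem_ofPred_eq, act, inv_inv]
    rw [Equiv.sum_comp w (h - m)]
    simp [hh, hm]
  rw [geOrd, mem_corootCone_iff hV]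
  refine forall_congr' fun i => ?_
  have e : prefixSum ℓ i (act ℓ w⁻¹ (h - m)) = chamberWt ℓ w i h - chamberWt ℓ w i m := by
    simp [prefixSum, act, chamberWt]
  rw [e, sub_nonneg]

end MV

open MV

/-- the pseudo-Weyl polytope `P(μ•)` coincides with the polytope `P(M•)`
cut out by the inequalities `(w·Λ_i)(h) ≥ M_{w·Λ_i}`. -/
theorem stmt5 (ℓ : ℕ) (hℓ : 3 ≤ ℓ)
    (μ : Equiv.Perm (Fin (ℓ+1)) → Fin (ℓ+1) → ℝ) (hμ : μ ∈ calV ℓ) :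
    {h | h ∈ Vsub ℓ ∧ ∀ w, geOrd ℓ w h (μ w)}
    = {h | h ∈ Vsub ℓ ∧ ∀ (w : Equiv.Perm (Fin (ℓ+1))) (i : Fin ℓ),
        chamberWt ℓ w i (μ w) ≤ chamberWt ℓ w i h} := by
  ext h
  exact and_congr_right fun hh => forall_congr' fun w => geOrd_iff w hh (hμ.1 w)
end

section
/- If μ•, μ'• ∈ 𝒱 and the pseudo-Weyl polytopes P(μ•) = {h ∈ V : h ≥_w μ_w for all w ∈ W} and P(μ'•) = {h ∈ V : h ≥_w μ'_w for all w ∈ W} are equal as subsets of V, then μ_w = μ'_w for all w ∈ W. -/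
open MV

namespace MV

/-- The height functional `x ↦ ∑ k, k * x k` is `-1` on every simple coroot. -/
lemma height_coroot (ℓ : ℕ) (i : Fin ℓ) : ∑ k : Fin (ℓ+1), (k : ℝ) * coroot ℓ i k = -1 := by
  have h1 : ∀ k : Fin (ℓ+1), (k : ℝ) * coroot ℓ i k
      = (if k = i.castSucc then (k : ℝ) else 0) - (if k = i.succ then (k : ℝ) else 0) := by
    intro k
    simp [coroot, Fin.ext_iff, mul_sub]
  simp only [h1, Finset.sum_sub_distrib, Finset.sum_ite_eq', Finset.mem_univ, if_true]
  simp

lemma height_combination (ℓ : ℕ) (c : Fin ℓ → ℝ) :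
    ∑ k : Fin (ℓ+1), (k : ℝ) * (∑ j, c j • coroot ℓ j) k = -∑ j, c j := by
  simp only [Finset.sum_apply, Pi.smul_apply, smul_eq_mul, Finset.mul_sum]
  rw [Finset.sum_comm, ← Finset.sum_neg_distrib]
  refine Finset.sum_congr rfl fun j _ => ?_
  calc ∑ k : Fin (ℓ+1), (k : ℝ) * (c j * coroot ℓ j k)
      = c j * ∑ k : Fin (ℓ+1), (k : ℝ) * coroot ℓ j k := by
        rw [Finset.mul_sum]
        exact Finset.sum_congr rfl fun k _ => by ring
    _ = -c j := by rw [height_coroot]; ring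

/-- The coroot cone is pointed. -/
lemma corootCone_pointed (ℓ : ℕ) (x : Fin (ℓ+1) → ℝ)
    (hx : x ∈ corootCone ℓ) (hx' : -x ∈ corootCone ℓ) : x = 0 := by
  obtain ⟨c, hc, rfl⟩ := hx
  obtain ⟨d, hd, hcd⟩ := hx'
  have hsum : ∑ j, c j = -∑ j, d j := by
    have h := height_combination ℓ d
    rw [← hcd] at h
    simp only [Pi.neg_apply, mul_neg, Finset.sum_neg_distrib] at h
    rw [height_combination] at h
    linarith
  have hd0 : 0 ≤ ∑ j, d j := Finset.sum_nonneg fun j _ => hd j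
  have hc0 : 0 ≤ ∑ j, c j := Finset.sum_nonneg fun j _ => hc j
  have hzero : ∑ j, c j = 0 := by linarith
  have hcj := (Finset.sum_eq_zero_iff_of_nonneg fun j _ => hc j).1 hzero
  exact Finset.sum_eq_zero fun j hj => by rw [hcj j hj, zero_smul]

lemma geOrd_antisymm (ℓ : ℕ) (w : Equiv.Perm (Fin (ℓ+1))) (h h' : Fin (ℓ+1) → ℝ)
    (h1 : geOrd ℓ w h h') (h2 : geOrd ℓ w h' h) : h = h' := by
  have hneg : act ℓ w⁻¹ (h' - h) = -act ℓ w⁻¹ (h - h') := by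
    funext k
    simp [act]
  unfold geOrd at h1 h2
  rw [hneg] at h2
  have h0 := corootCone_pointed ℓ _ h1 h2
  funext k
  have hk := congrFun h0 (w⁻¹ k)
  have hw : w (w⁻¹ k) = k := w.apply_symm_apply k
  simp only [act, inv_inv, hw, Pi.sub_apply, Pi.zero_apply] at hk
  linarith

end MV

/-- a pseudo-Weyl polytope determines its GGMS datum. -/
theorem stmt6 (ℓ : ℕ) (hℓ : 3 ≤ ℓ)
    (μ μ' : Equiv.Perm (Fin (ℓ+1)) → Fin (ℓ+1) → ℝ)
    (hμ : μ ∈ calV ℓ) (hμ' : μ' ∈ calV ℓ)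
    (hP : {h | h ∈ Vsub ℓ ∧ ∀ w, geOrd ℓ w h (μ w)}
        = {h | h ∈ Vsub ℓ ∧ ∀ w, geOrd ℓ w h (μ' w)}) :
    ∀ w, μ w = μ' w := by
  obtain ⟨hV, hge, _⟩ := hμ
  obtain ⟨hV', hge', _⟩ := hμ'
  intro w
  have hmem : μ w ∈ {h | h ∈ Vsub ℓ ∧ ∀ w, geOrd ℓ w h (μ' w)} :=
    hP ▸ ⟨hV w, fun v => hge v w⟩
  have hmem' : μ' w ∈ {h | h ∈ Vsub ℓ ∧ ∀ w, geOrd ℓ w h (μ w)} :=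
    hP.symm ▸ ⟨hV' w, fun v => hge' v w⟩
  exact geOrd_antisymm ℓ w _ _ (hmem.2 w) (hmem'.2 w)
end

section
/- (Folding of the coroot cone.) The set of J-fixed points of the cone Σ_{j∈I} ℝ_{≥0} h_j equals the cone Σ_{j=1}^{n} ℝ_{≥0} h_j^ω spanned by the folded simple coroots; that is, {x ∈ Σ_{j∈I} ℝ_{≥0} h_j : Jx = x} = Σ_{j=1}^{n} ℝ_{≥0} h_j^ω. -/
namespace MV

/-- The set of nonnegative combinations of a finite family is closed under nonnegative
combinations; both `corootCone` and `fcone` unfold to sets of this form. -/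
lemma nonneg_comb_closed {E ι κ : Type*} [AddCommGroup E] [Module ℝ E] [Fintype ι] [Fintype κ]
    (v : κ → E) (u : ι → E) (a : ι → ℝ) (ha : ∀ i, 0 ≤ a i)
    (hu : ∀ i, ∃ c : κ → ℝ, (∀ j, 0 ≤ c j) ∧ u i = ∑ j, c j • v j) :
    ∃ c : κ → ℝ, (∀ j, 0 ≤ c j) ∧ ∑ i, a i • u i = ∑ j, c j • v j := by
  choose c hc huc using hu
  refine ⟨fun j => ∑ i, a i * c i j,
    fun j => Finset.sum_nonneg fun i _ => mul_nonneg (ha i) (hc i j), ?_⟩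
  simp only [huc, Finset.smul_sum, Finset.sum_smul, smul_smul]
  exact Finset.sum_comm

lemma nonneg_smul_mem_comb {E κ : Type*} [AddCommGroup E] [Module ℝ E] [Fintype κ]
    [DecidableEq κ] (v : κ → E) (j : κ) (t : ℝ) (ht : 0 ≤ t) :
    ∃ c : κ → ℝ, (∀ j, 0 ≤ c j) ∧ t • v j = ∑ j, c j • v j := by
  refine ⟨fun k => if k = j then t else 0, fun k => ?_, by simp⟩
  dsimp only
  split_ifs <;> simp [ht]

lemma Jmap_sum_smul {ι : Type*} [Fintype ι] (ℓ : ℕ) (c : ι → ℝ) (u : ι → Fin (ℓ+1) → ℝ) :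
    Jmap ℓ (∑ i, c i • u i) = ∑ i, c i • Jmap ℓ (u i) := by
  funext k
  simp [Jmap, Finset.sum_apply]

lemma Jmap_corootN (ℓ j : ℕ) (hj : j < ℓ) : Jmap ℓ (corootN ℓ j) = corootN ℓ (ℓ - 1 - j) := by
  funext k
  have hk := k.isLt
  have h1 : (ℓ - k = j) ↔ ((k : ℕ) = ℓ - 1 - j + 1) := by omega
  have h2 : (ℓ - k = j + 1) ↔ ((k : ℕ) = ℓ - 1 - j) := by omega
  simp [Jmap, corootN, Fin.val_rev, h1, h2]

lemma Jmap_add (ℓ : ℕ) (x y : Fin (ℓ+1) → ℝ) : Jmap ℓ (x + y) = Jmap ℓ x + Jmap ℓ y := by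
  funext k
  simp [Jmap, add_comm]

lemma Jmap_smul (ℓ : ℕ) (t : ℝ) (x : Fin (ℓ+1) → ℝ) : Jmap ℓ (t • x) = t • Jmap ℓ x := by
  funext k
  simp [Jmap]

/-- The orbit sum `h_a + h_{ℓ-1-a}` (0-based) equals `h_a^ω`, except at the last index `a = n-1`,
where it is `2 h_a^ω` for `ℓ = 2n-1` and `h_a^ω / 2` for `ℓ = 2n`. -/
lemma orbit_sum_mem_fcone (ℓ n a : ℕ) (hln : ℓ = 2 * n - 1 ∨ ℓ = 2 * n) (ha : a < n) :
    corootN ℓ a + corootN ℓ (ℓ - 1 - a) ∈ fcone ℓ n := by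
  have key : ∃ t : ℝ, 0 ≤ t ∧
      corootN ℓ a + corootN ℓ (ℓ - 1 - a) = t • fcoroot ℓ n ⟨a, ha⟩ := by
    by_cases h : a + 1 < n
    · exact ⟨1, zero_le_one, by simp [fcoroot, h]⟩
    · by_cases hl : ℓ = 2 * n - 1
      · refine ⟨2, zero_le_two, ?_⟩
        have e : ℓ - 1 - a = a := by omega
        rw [e, fcoroot, if_neg h, if_pos hl, two_smul]
      · refine ⟨1 / 2, by norm_num, ?_⟩
        have e : ℓ - 1 - a = a + 1 := by omega
        rw [e, fcoroot, if_neg h, if_neg hl, smul_smul]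
        norm_num
  obtain ⟨t, ht, e⟩ := key
  rw [e]
  exact nonneg_smul_mem_comb (fcoroot ℓ n) _ t ht

lemma coroot_add_Jmap_mem_fcone (ℓ n : ℕ) (hln : ℓ = 2 * n - 1 ∨ ℓ = 2 * n) (i : Fin ℓ) :
    coroot ℓ i + Jmap ℓ (coroot ℓ i) ∈ fcone ℓ n := by
  have hi := i.isLt
  change corootN ℓ i + Jmap ℓ (corootN ℓ i) ∈ fcone ℓ n
  rw [Jmap_corootN ℓ i hi]
  by_cases h : (i : ℕ) < n
  · exact orbit_sum_mem_fcone ℓ n i hln h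
  · have := orbit_sum_mem_fcone ℓ n (ℓ - 1 - i) hln (by omega)
    rwa [show ℓ - 1 - (ℓ - 1 - (i : ℕ)) = i by omega, add_comm (corootN ℓ _)] at this

lemma corootN_add_mem (ℓ : ℕ) (t : ℝ) (ht : 0 ≤ t) (a b : ℕ) (ha : a < ℓ) (hb : b < ℓ) :
    t • (corootN ℓ a + corootN ℓ b) ∈ corootCone ℓ := by
  have := nonneg_comb_closed (coroot ℓ) ![coroot ℓ ⟨a, ha⟩, coroot ℓ ⟨b, hb⟩] (fun _ => t)
    (fun _ => ht) (fun i => by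
      fin_cases i
      · simpa using nonneg_smul_mem_comb (coroot ℓ) ⟨a, ha⟩ 1 zero_le_one
      · simpa using nonneg_smul_mem_comb (coroot ℓ) ⟨b, hb⟩ 1 zero_le_one)
  rw [Fin.sum_univ_two, ← smul_add] at this
  exact this

lemma fcoroot_mem (ℓ n : ℕ) (hn : 2 ≤ n) (hln : ℓ = 2 * n - 1 ∨ ℓ = 2 * n) (j : Fin n) :
    fcoroot ℓ n j ∈ corootCone ℓ ∧ Jmap ℓ (fcoroot ℓ n j) = fcoroot ℓ n j := by
  have hj := j.isLt
  unfold fcoroot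
  split_ifs with h hl
  · constructor
    · simpa using corootN_add_mem ℓ 1 zero_le_one j (ℓ - 1 - j) (by omega) (by omega)
    · rw [Jmap_add, Jmap_corootN ℓ _ (by omega), Jmap_corootN ℓ _ (by omega),
        add_comm (corootN ℓ _), show ℓ - 1 - (ℓ - 1 - (j : ℕ)) = j by omega]
  · constructor
    · have := nonneg_smul_mem_comb (coroot ℓ) ⟨j, by omega⟩ 1 zero_le_one
      rw [one_smul] at this
      exact this
    · rw [Jmap_corootN ℓ _ (by omega), show ℓ - 1 - (j : ℕ) = j by omega]
  · constructor
    · exact corootN_add_mem ℓ 2 zero_le_two j (j + 1) (by omega) (by omega)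
    · rw [Jmap_smul, Jmap_add, Jmap_corootN ℓ _ (by omega), Jmap_corootN ℓ _ (by omega),
        add_comm (corootN ℓ _), show ℓ - 1 - (j : ℕ) = j + 1 by omega,
        show ℓ - 1 - ((j : ℕ) + 1) = j by omega]

end MV

open MV

/-- folding of the coroot cone: the `J`-fixed points of the cone
`Σ_{j∈I} ℝ_{≥0} h_j` form the folded cone `Σ_{j=1}^{n} ℝ_{≥0} h_j^ω`. -/
theorem stmt13 (ℓ n : ℕ) (hn : 2 ≤ n) (hln : ℓ = 2 * n - 1 ∨ ℓ = 2 * n) :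
    {x | x ∈ corootCone ℓ ∧ Jmap ℓ x = x} = fcone ℓ n := by
  ext x
  constructor
  · rintro ⟨⟨c, hc, hx⟩, hJ⟩
    -- `x` equals the average `(x + Jx)/2`, a nonnegative combination of orbit sums.
    have e : x = ∑ i, (c i / 2) • (coroot ℓ i + Jmap ℓ (coroot ℓ i)) := by
      have h2 : x = (1 / 2 : ℝ) • (x + Jmap ℓ x) := by
        rw [hJ, ← two_smul ℝ x, smul_smul]
        norm_num
      rw [h2, hx, Jmap_sum_smul, ← Finset.sum_add_distrib, Finset.smul_sum]
      refine Finset.sum_congr rfl fun i _ => ?_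
      rw [← smul_add, smul_smul]
      congr 1
      ring
    rw [e]
    exact nonneg_comb_closed (fcoroot ℓ n) _ _ (fun i => div_nonneg (hc i) zero_le_two)
      (coroot_add_Jmap_mem_fcone ℓ n hln)
  · rintro ⟨c, hc, rfl⟩
    refine ⟨nonneg_comb_closed (coroot ℓ) _ c hc fun j => (fcoroot_mem ℓ n hn hln j).1, ?_⟩
    rw [Jmap_sum_smul]
    exact Finset.sum_congr rfl fun j _ => by rw [(fcoroot_mem ℓ n hn hln j).2]
end

section
/- Let μ• ∈ 𝒱^ω. Then for all w, w' ∈ W^ω, the element w⁻¹·(μ_{w'} − μ_w) lies in the folded coroot cone Σ_{j=1}^{n} ℝ_{≥0} h_j^ω. (In other words, the collection (μ_{Θ(ŵ)})_{ŵ} indexed by the Weyl group of type C_n (if ℓ = 2n−1) or B_n (if ℓ = 2n) satisfies the defining order conditions of the set 𝒱̂ for the folded root system.) -/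
open MV

/-- A permutation commuting with `w₀` commutes with the reversal of indices. -/
theorem perm_rev_of_fixed {ℓ : ℕ} {w : Equiv.Perm (Fin (ℓ+1))}
    (hw : w0 ℓ * w * w0 ℓ = w) (k : Fin (ℓ+1)) : w k.rev = (w k).rev := by
  have h := congrArg (fun f : Equiv.Perm (Fin (ℓ+1)) => f k) hw
  simp only [w0, Equiv.Perm.mul_apply, Fin.revPerm_apply] at h
  rw [← h, Fin.rev_rev]

theorem corootN_rev {ℓ j : ℕ} (hj : j < ℓ) (k : Fin (ℓ+1)) :
    - corootN ℓ j k.rev = corootN ℓ (ℓ - 1 - j) k := by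
  have hk := k.isLt
  have h1 : (((k.rev : Fin (ℓ+1)) : ℕ) = j) ↔ ((k : ℕ) = ℓ - 1 - j + 1) := by
    rw [Fin.val_rev]; omega
  have h2 : (((k.rev : Fin (ℓ+1)) : ℕ) = j + 1) ↔ ((k : ℕ) = ℓ - 1 - j) := by
    rw [Fin.val_rev]; omega
  simp only [corootN, h1, h2]
  ring

/-- A `J`-fixed element of the coroot cone is a nonnegative combination whose coefficients are
invariant under the diagram automorphism. Coefficients are indexed by `ℕ`. -/
theorem exists_symm_coeff {ℓ : ℕ} {x : Fin (ℓ+1) → ℝ} (hx : x ∈ corootCone ℓ)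
    (hJ : Jmap ℓ x = x) :
    ∃ d : ℕ → ℝ, (∀ j, 0 ≤ d j) ∧ (∀ j < ℓ, d (ℓ - 1 - j) = d j) ∧
      x = ∑ j ∈ Finset.range ℓ, d j • corootN ℓ j := by
  obtain ⟨c, hc, hxc⟩ := hx
  let e : ℕ → ℝ := fun j => if h : j < ℓ then c ⟨j, h⟩ else 0
  have he : ∀ j, 0 ≤ e j := by
    intro j
    by_cases h : j < ℓ
    · simpa [e, h] using hc ⟨j, h⟩
    · simp [e, h]
  have hxe : x = ∑ j ∈ Finset.range ℓ, e j • corootN ℓ j := by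
    rw [hxc, ← Fin.sum_univ_eq_sum_range (fun j => e j • corootN ℓ j)]
    refine Finset.sum_congr rfl fun j _ => ?_
    simp only [e, j.isLt, dite_true]
    rfl
  have hxr : x = ∑ j ∈ Finset.range ℓ, e (ℓ - 1 - j) • corootN ℓ j := by
    rw [← Finset.sum_range_reflect]
    funext k
    rw [← congrFun hJ k]
    simp only [Jmap]
    rw [congrFun hxe k.rev]
    simp only [Finset.sum_apply, Pi.smul_apply, smul_eq_mul, ← Finset.sum_neg_distrib]
    refine Finset.sum_congr rfl fun j hj => ?_
    have hj' := Finset.mem_range.mp hj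
    rw [← corootN_rev hj' k, show ℓ - 1 - (ℓ - 1 - j) = j by omega]
    ring
  refine ⟨fun j => (e j + e (ℓ - 1 - j)) / 2, fun j => ?_, fun j hj => ?_, ?_⟩
  · have h1 := he j
    have h2 := he (ℓ - 1 - j)
    positivity
  · simp only [show ℓ - 1 - (ℓ - 1 - j) = j by omega]
    ring
  · funext k
    have h1 := congrFun hxe k
    have h2 := congrFun hxr k
    simp only [Finset.sum_apply, Pi.smul_apply, smul_eq_mul] at h1 h2 ⊢
    have h3 : ∑ j ∈ Finset.range ℓ, (e j + e (ℓ - 1 - j)) / 2 * corootN ℓ j k =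
        (∑ j ∈ Finset.range ℓ, e j * corootN ℓ j k +
          ∑ j ∈ Finset.range ℓ, e (ℓ - 1 - j) * corootN ℓ j k) / 2 := by
      rw [← Finset.sum_add_distrib, Finset.sum_div]
      exact Finset.sum_congr rfl fun j _ => by ring
    rw [h3, ← h1, ← h2]
    ring

/-- Pairing the terms `j` and `ℓ - 1 - j` turns a symmetric combination of simple coroots into a
combination of folded coroots. -/
theorem mem_fcone_of_symm {ℓ n : ℕ} (hn : 2 ≤ n) (hln : ℓ = 2 * n - 1 ∨ ℓ = 2 * n)
    {d : ℕ → ℝ} (hd : ∀ j, 0 ≤ d j) (hs : ∀ j < ℓ, d (ℓ - 1 - j) = d j) :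
    ∑ j ∈ Finset.range ℓ, d j • corootN ℓ j ∈ fcone ℓ n := by
  obtain ⟨m, rfl⟩ : ∃ m, n = m + 1 := ⟨n - 1, by omega⟩
  -- The terms with index below `m` pair with the last `m` terms.
  have key : ∀ p, ℓ = m + p + m → ∑ j ∈ Finset.range ℓ, d j • corootN ℓ j =
      ∑ j ∈ Finset.range m, d j • (corootN ℓ j + corootN ℓ (ℓ - 1 - j)) +
        ∑ i ∈ Finset.range p, d (m + i) • corootN ℓ (m + i) := by
    intro p hp
    have hsplit : ∑ j ∈ Finset.range (m + p + m), d j • corootN ℓ j =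
        ∑ j ∈ Finset.range m, d j • corootN ℓ j +
          ∑ i ∈ Finset.range p, d (m + i) • corootN ℓ (m + i) +
          ∑ i ∈ Finset.range m, d (m + p + i) • corootN ℓ (m + p + i) := by
      rw [Finset.sum_range_add, Finset.sum_range_add]
    have hrefl : ∑ i ∈ Finset.range m, d (m + p + i) • corootN ℓ (m + p + i) =
        ∑ j ∈ Finset.range m, d j • corootN ℓ (ℓ - 1 - j) := by
      rw [← Finset.sum_range_reflect]
      refine Finset.sum_congr rfl fun j hj => ?_
      have hj' := Finset.mem_range.mp hj
      rw [show m + p + (m - 1 - j) = ℓ - 1 - j by omega, hs j (by omega)]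
    rw [← hp] at hsplit
    rw [hsplit, hrefl]
    simp only [smul_add, Finset.sum_add_distrib]
    abel
  rcases hln with h | h
  · refine ⟨fun j => d j, fun j => hd j, ?_⟩
    rw [key 1 (by omega), Fin.sum_univ_castSucc,
      ← Fin.sum_univ_eq_sum_range (fun j => d j • (corootN ℓ j + corootN ℓ (ℓ - 1 - j)))]
    simp [fcoroot, h]
  · have hmid : d (m + 1) = d m := by
      rw [← hs m (by omega)]
      congr 1
      omega
    -- The last folded coroot carries a factor `2`, which halves its coefficient.
    refine ⟨fun j => if (j : ℕ) < m then d j else d j / 2, fun j => ?_, ?_⟩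
    · have := hd j
      dsimp only
      split_ifs <;> positivity
    · rw [key 2 (by omega), Fin.sum_univ_castSucc,
        ← Fin.sum_univ_eq_sum_range (fun j => d j • (corootN ℓ j + corootN ℓ (ℓ - 1 - j)))]
      have hodd : ℓ ≠ 2 * (m + 1) - 1 := by omega
      simp [fcoroot, hodd, Finset.sum_range_succ, hmid, smul_smul]

/-- for `μ• ∈ 𝒱^ω` and `w, w' ∈ W^ω`, the element `w⁻¹·(μ_{w'} - μ_w)`
lies in the folded coroot cone. -/
theorem stmt14 (ℓ n : ℕ) (hn : 2 ≤ n) (hln : ℓ = 2 * n - 1 ∨ ℓ = 2 * n)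
    (μ : Equiv.Perm (Fin (ℓ+1)) → Fin (ℓ+1) → ℝ) (hμ : μ ∈ calV ℓ)
    (hfix : ∀ w, Jmap ℓ (μ (w0 ℓ * w * w0 ℓ)) = μ w)
    (w w' : Equiv.Perm (Fin (ℓ+1)))
    (hw : w0 ℓ * w * w0 ℓ = w) (hw' : w0 ℓ * w' * w0 ℓ = w') :
    act ℓ w⁻¹ (μ w' - μ w) ∈ fcone ℓ n := by
  have hcone : act ℓ w⁻¹ (μ w' - μ w) ∈ corootCone ℓ := hμ.2.1 w w'
  have hJμ : ∀ v, w0 ℓ * v * w0 ℓ = v → ∀ k, - μ v k.rev = μ v k := by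
    intro v hv k
    have h := congrFun (hfix v) k
    rwa [hv] at h
  have hJ : Jmap ℓ (act ℓ w⁻¹ (μ w' - μ w)) = act ℓ w⁻¹ (μ w' - μ w) := by
    funext k
    simp only [Jmap, act, inv_inv, Pi.sub_apply, perm_rev_of_fixed hw]
    rw [← hJμ w hw (w k), ← hJμ w' hw' (w k)]
    ring
  obtain ⟨d, hd, hs, hx⟩ := exists_symm_coeff hcone hJ
  rw [hx]
  exact mem_fcone_of_symm hn hln hd hs
end

section
/- Assume ℓ = 2n with n ≥ 2, so N = 2n+1. Let M be a real-valued function on the nonempty proper subsets of {1,…,N} such that M_{ω(S)} = M_S for every such subset S, where ω(S) := {1,…,N} ∖ {N+1−k : k ∈ S}. Let w ∈ W satisfy w₀ w w₀ = w, and suppose the tropical Plücker relation at (w, n, n+1) holds: M_{w s_n(A_n)} + M_{w s_{n+1}(A_{n+1})} = min( M_{w(A_n)} + M_{w s_n s_{n+1}(A_{n+1})}, M_{w s_{n+1} s_n(A_n)} + M_{w(A_{n+1})} ), where A_i = {1,…,i} and u(S) denotes the image of S under the permutation u. Then 2 M_{w s_n(A_n)} = M_{w(A_n)} + M_{w s_{n+1}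 s_n(A_n)}. -/
open MV

/-- `w₀ s_n w₀ = s_{n+1}`; the arguments of `swN` are 0-based. -/
lemma rev_conj_swN (n : ℕ) (hn : 2 ≤ n) :
    Fin.revPerm * swN (2 * n) (n - 1) * Fin.revPerm = swN (2 * n) n := by
  have h1 : n - 1 + 1 ≤ 2 * n := by omega
  have h2 : n + 1 ≤ 2 * n := by omega
  rw [swN, swN, dif_pos h1, dif_pos h2, Equiv.mul_swap_eq_swap_mul, mul_assoc]
  have h3 : (Fin.revPerm : Equiv.Perm (Fin (2 * n + 1))) * Fin.revPerm = 1 := by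
    ext k; simp
  rw [h3, mul_one, Equiv.swap_comm]
  congr 1 <;> ext <;> simp [Fin.val_rev] <;> omega

/-- An `ω`-invariant `M` satisfies `M_{v(A_{n+1})} = M_{u(A_n)}` whenever `v = w₀ u w₀`. -/
lemma apply_image_succ_eq (n : ℕ) (hn : 2 ≤ n)
    (M : Finset (Fin (2 * n + 1)) → ℝ)
    (hsym : ∀ S : Finset (Fin (2 * n + 1)), S.Nonempty → S ≠ Finset.univ →
      M ((S.image Fin.rev)ᶜ) = M S)
    (u v : Equiv.Perm (Fin (2 * n + 1))) (huv : Fin.revPerm * u * Fin.revPerm = v) :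
    M ((Finset.univ.filter (fun k : Fin (2 * n + 1) => (k : ℕ) < n + 1)).image ⇑v)
      = M ((Finset.univ.filter (fun k : Fin (2 * n + 1) => (k : ℕ) < n)).image ⇑u) := by
  subst huv
  rw [← hsym (Finset.image (⇑u) _)]
  · congr 1
    ext x
    obtain ⟨y, rfl⟩ := (Fin.revPerm * u * Fin.revPerm).surjective x
    rw [Function.Injective.mem_finset_image (Equiv.injective _), Finset.mem_compl]
    simp only [Equiv.Perm.mul_apply, Fin.revPerm_apply]
    rw [Fin.rev_injective.mem_finset_image, u.injective.mem_finset_image]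
    simp only [Finset.mem_filter, Finset.mem_univ, true_and, Fin.val_rev]
    omega
  · exact Finset.Nonempty.image ⟨⟨0, by omega⟩, by simp; omega⟩ _
  · intro h
    have h' := h ▸ Finset.mem_univ (u ⟨n, by omega⟩)
    rw [u.injective.mem_finset_image] at h'
    simp at h'

/-- for an `ω`-symmetric function `M` on chamber weights (encoded as
nonempty proper subsets of `{1,…,N}`, `N = 2n+1`) and `ω`-fixed `w`, the tropical
Plücker relation at `(w, n, n+1)` forces `2 M_{w s_n(A_n)} = M_{w(A_n)} + M_{w s_{n+1} s_n(A_n)}`. -/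
theorem stmt16 (n : ℕ) (hn : 2 ≤ n)
    (M : Finset (Fin (2 * n + 1)) → ℝ)
    (hsym : ∀ S : Finset (Fin (2 * n + 1)), S.Nonempty → S ≠ Finset.univ →
      M ((S.image Fin.rev)ᶜ) = M S)
    (w : Equiv.Perm (Fin (2 * n + 1)))
    (hw : Fin.revPerm * w * Fin.revPerm = w)
    (htp :
      M (((Finset.univ.filter (fun k : Fin (2 * n + 1) => (k : ℕ) < n)).image
            ⇑(w * swN (2 * n) (n - 1))))
      + M (((Finset.univ.filter (fun k : Fin (2 * n + 1) => (k : ℕ) < n + 1)).image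
            ⇑(w * swN (2 * n) n)))
      = min
          (M (((Finset.univ.filter (fun k : Fin (2 * n + 1) => (k : ℕ) < n)).image ⇑w))
           + M (((Finset.univ.filter (fun k : Fin (2 * n + 1) => (k : ℕ) < n + 1)).image
                ⇑(w * swN (2 * n) (n - 1) * swN (2 * n) n))))
          (M (((Finset.univ.filter (fun k : Fin (2 * n + 1) => (k : ℕ) < n)).image
                ⇑(w * swN (2 * n) n * swN (2 * n) (n - 1))))
           + M (((Finset.univ.filter (fun k : Fin (2 * n + 1) => (k : ℕ) < n + 1)).image ⇑w)))) :
    2 * M (((Finset.univ.filter (fun k : Fin (2 * n + 1) => (k : ℕ) < n)).image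
            ⇑(w * swN (2 * n) (n - 1))))
    = M (((Finset.univ.filter (fun k : Fin (2 * n + 1) => (k : ℕ) < n)).image ⇑w))
      + M (((Finset.univ.filter (fun k : Fin (2 * n + 1) => (k : ℕ) < n)).image
            ⇑(w * swN (2 * n) n * swN (2 * n) (n - 1)))) := by
  have hr : (Fin.revPerm : Equiv.Perm (Fin (2 * n + 1))) * Fin.revPerm = 1 := by
    ext k; simp
  have conj_mul : ∀ a b : Equiv.Perm (Fin (2 * n + 1)),
      Fin.revPerm * (a * b) * Fin.revPerm
        = (Fin.revPerm * a * Fin.revPerm) * (Fin.revPerm * b * Fin.revPerm) := by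
    intro a b
    simp only [mul_assoc]
    rw [← mul_assoc Fin.revPerm Fin.revPerm, hr, one_mul]
  have hs := rev_conj_swN n hn
  have hs' : Fin.revPerm * swN (2 * n) n * Fin.revPerm = swN (2 * n) (n - 1) := by
    rw [← hs]
    simp only [mul_assoc, hr, mul_one]
    rw [← mul_assoc, hr, one_mul]
  rw [apply_image_succ_eq n hn M hsym _ _ hw,
    apply_image_succ_eq n hn M hsym (w * swN (2 * n) (n - 1)) (w * swN (2 * n) n)
      (by rw [conj_mul, hw, hs]),
    apply_image_succ_eq n hn M hsym (w * swN (2 * n) n * swN (2 * n) (n - 1))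
      (w * swN (2 * n) (n - 1) * swN (2 * n) n)
      (by rw [conj_mul, conj_mul, hw, hs, hs'])] at htp
  rw [two_mul, htp, add_comm (M (Finset.image _ _)) (M (Finset.image ⇑w _)), min_self]
end

section
/- Assume ℓ = 2n−1 or ℓ = 2n with n ≥ 2, and let 1 ≤ j ≤ n−1. Let c ∈ ℝ and define the affine reflections σ, τ : V → V by σ(h) = s_j·h + c h_j and τ(h) = s_{ℓ+1−j}·h + c h_{ℓ+1−j}. Then for every x ∈ V with Jx = x, one has σ(τ(x)) − x = (c − (x_j − x_{j+1})) · (h_j + h_{ℓ+1−j}). -/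
open MV

/-- The reflection formula `s_i·y = y - α_i(y) h_i`. -/
theorem act_simpleRefl (ℓ : ℕ) (i : Fin ℓ) (y : Fin (ℓ+1) → ℝ) :
    act ℓ (simpleRefl ℓ i) y = y - (y i.castSucc - y i.succ) • coroot ℓ i := by
  funext k
  simp only [act, simpleRefl, Equiv.swap_inv, Pi.sub_apply, Pi.smul_apply, smul_eq_mul, coroot]
  by_cases h1 : k = i.castSucc
  · subst h1
    simp
  · by_cases h2 : k = i.succ
    · subst h2
      simp
    · rw [Equiv.swap_apply_of_ne_of_ne h1 h2]
      have hk_left : (k : ℕ) ≠ i := fun h => h1 (Fin.ext h)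
      have hk_right : (k : ℕ) ≠ i + 1 := fun h => h2 (Fin.ext h)
      simp [hk_left, hk_right]

/-- `α_i(h_k) = 0` for nodes `i < k` that are not adjacent in the Dynkin diagram. -/
theorem coroot_sub_eq_zero (ℓ : ℕ) (i k : Fin ℓ) (h : (i : ℕ) + 1 < k) :
    coroot ℓ k i.castSucc - coroot ℓ k i.succ = 0 := by
  have h1 : (i : ℕ) ≠ k := by omega
  have h2 : (i : ℕ) ≠ k + 1 := by omega
  have h3 : (i : ℕ) + 1 ≠ k := by omega
  simp [coroot, h1, h2, h3]

/-- for `1 ≤ j ≤ n-1`, the composed affine reflections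
`σ(h) = s_j·h + c h_j`, `τ(h) = s_{ℓ+1-j}·h + c h_{ℓ+1-j}` satisfy on `J`-fixed `x ∈ V`:
`σ(τ(x)) - x = (c - (x_j - x_{j+1})) · (h_j + h_{ℓ+1-j})`. -/
theorem stmt18 (ℓ n : ℕ) (hn : 2 ≤ n) (hln : ℓ = 2 * n - 1 ∨ ℓ = 2 * n)
    (j : ℕ) (hj1 : 1 ≤ j) (hj2 : j ≤ n - 1) (c : ℝ)
    (x : Fin (ℓ+1) → ℝ) (hx : x ∈ Vsub ℓ) (hfix : Jmap ℓ x = x) :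
    (act ℓ (simpleRefl ℓ ⟨j - 1, by omega⟩)
        (act ℓ (simpleRefl ℓ ⟨ℓ - j, by omega⟩) x + c • coroot ℓ ⟨ℓ - j, by omega⟩)
      + c • coroot ℓ ⟨j - 1, by omega⟩) - x
    = (c - (x ⟨j - 1, by omega⟩ - x ⟨j, by omega⟩))
        • (coroot ℓ ⟨j - 1, by omega⟩ + coroot ℓ ⟨ℓ - j, by omega⟩) := by
  -- `J x = x` says `x_k = -x_{N+1-k}`, whence `α_{ℓ+1-j}(x) = α_j(x)`.
  have hrev : ∀ a b : Fin (ℓ+1), (a : ℕ) + b = ℓ → x a = - x b := by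
    intro a b hab
    have hb : a.rev = b := Fin.ext (by rw [Fin.val_rev]; omega)
    have := congrFun hfix a
    rw [Jmap, hb] at this
    exact this.symm
  have e1 : x ⟨ℓ - j, by omega⟩ = - x ⟨j, by omega⟩ := hrev _ _ (by simp; omega)
  have e2 : x ⟨ℓ - j + 1, by omega⟩ = - x ⟨j - 1, by omega⟩ := hrev _ _ (by simp; omega)
  have e3 : (⟨j - 1 + 1, by omega⟩ : Fin (ℓ+1)) = ⟨j, by omega⟩ := Fin.ext (by simp; omega)
  have hfar := sub_eq_zero.mp (coroot_sub_eq_zero ℓ ⟨j - 1, by omega⟩ ⟨ℓ - j, by omega⟩ (by simp; omega))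
  -- The shift by `c h_{ℓ+1-j}` and the reflection part of `τ` do not change `α_j`.
  rw [act_simpleRefl, act_simpleRefl]
  simp only [Pi.add_apply, Pi.sub_apply, Pi.smul_apply, smul_eq_mul, hfar]
  simp only [Fin.castSucc_mk, Fin.succ_mk, e1, e2, e3]
  module
end

section
/- Let μ• ∈ 𝒱 and let P(μ•) = {h ∈ V : h ≥_w μ_w for all w ∈ W}. Then for every w ∈ W and i ∈ I, the vertex μ_w belongs to P(μ•) and M_{w·Λ_i} = min{ (w·Λ_i)(h) : h ∈ P(μ•) }; consequently the edge datum (M_{w·Λ_i}) is determined by the polytope P(μ•) alone. -/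
open MV

/-- The fundamental weight `Λ_i` is nonnegative on every simple coroot: its value on `h_j` is
`[j ≤ i] - [j + 1 ≤ i]`. -/
lemma coroot_partialSum_nonneg (ℓ : ℕ) (i j : Fin ℓ) :
    0 ≤ ∑ k ∈ Finset.univ.filter (fun k : Fin (ℓ+1) => (k : ℕ) ≤ (i : ℕ)), coroot ℓ j k := by
  have h1 : ∀ k : Fin (ℓ+1), ((k : ℕ) = (j : ℕ)) ↔ k = j.castSucc := fun k => by
    simp [Fin.ext_iff]
  have h2 : ∀ k : Fin (ℓ+1), ((k : ℕ) = (j : ℕ) + 1) ↔ k = j.succ := fun k => by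
    simp [Fin.ext_iff]
  simp only [coroot, h1, h2, Finset.sum_sub_distrib, Finset.sum_ite_eq', Finset.mem_filter,
    Finset.mem_univ, true_and, Fin.val_castSucc, Fin.val_succ]
  split_ifs <;> first | omega | norm_num

/-- The functional `w·Λ_i` is monotone for the order `≥_w`. -/
lemma chamberWt_le_of_geOrd (ℓ : ℕ) (w : Equiv.Perm (Fin (ℓ+1))) (i : Fin ℓ)
    {h h' : Fin (ℓ+1) → ℝ} (hh : geOrd ℓ w h h') : chamberWt ℓ w i h' ≤ chamberWt ℓ w i h := by
  obtain ⟨c, hc, hx⟩ := hh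
  have key : chamberWt ℓ w i h - chamberWt ℓ w i h' = ∑ j, c j *
      ∑ k ∈ Finset.univ.filter (fun k : Fin (ℓ+1) => (k : ℕ) ≤ (i : ℕ)), coroot ℓ j k := by
    simp only [chamberWt, Finset.mul_sum]
    rw [← Finset.sum_sub_distrib, Finset.sum_comm]
    refine Finset.sum_congr rfl fun k _ => ?_
    simpa [act] using congrFun hx k
  rw [← sub_nonneg, key]
  exact Finset.sum_nonneg fun j _ => mul_nonneg (hc j) (coroot_partialSum_nonneg ℓ i j)

/-- each `μ_w` belongs to `P(μ•)`, and `M_{w·Λ_i}` is the minimum of the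
functional `w·Λ_i` over `P(μ•)`. -/
theorem stmt19 (ℓ : ℕ) (hℓ : 3 ≤ ℓ)
    (μ : Equiv.Perm (Fin (ℓ+1)) → Fin (ℓ+1) → ℝ) (hμ : μ ∈ calV ℓ)
    (w : Equiv.Perm (Fin (ℓ+1))) (i : Fin ℓ) :
    μ w ∈ {h | h ∈ Vsub ℓ ∧ ∀ v, geOrd ℓ v h (μ v)} ∧
    IsLeast (chamberWt ℓ w i '' {h | h ∈ Vsub ℓ ∧ ∀ v, geOrd ℓ v h (μ v)})
      (chamberWt ℓ w i (μ w)) := by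
  have hmem : μ w ∈ {h | h ∈ Vsub ℓ ∧ ∀ v, geOrd ℓ v h (μ v)} := ⟨hμ.1 w, fun v => hμ.2.1 v w⟩
  refine ⟨hmem, Set.mem_image_of_mem _ hmem, ?_⟩
  rintro _ ⟨h, hh, rfl⟩
  exact chamberWt_le_of_geOrd ℓ w i (hh.2 w)
end
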